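/- Let G be a group, let σ and Fr be automorphisms of G, and let q be a positive integer such that Fr⁻¹ ∘ σ ∘ Fr = σ^q. Fix g ∈ G and set n_σ := g⁻¹·σ(g) and n_Fr := g⁻¹·Fr(g), and for x ∈ G set N_q(x) := x·σ(x)·σ²(x)···σ^{q−1}(x). If y ∈ G satisfies Fr(N_q(n_σ)) = y⁻¹ · n_σ · σ(y), then the element u := n_Fr·y⁻¹ satisfies n_σ · σ(u) · n_σ⁻¹ = u. In other words, the equation Fr(N_q(n_σ)) = y⁻¹·n_σ·σ(y) determines the element n_Fr uniquely up to left multiplication by an element fixed under the map x ↦ n_σ·σ(x)·n_σ⁻¹. -/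

import Mathlib

/-!
The product `N_q(n_σ)` telescopes to `g⁻¹ * σ^q(g)`. Since `Fr ∘ σ^q = σ ∘ Fr`, its image under `Fr`
is the Lang map of `σ` at `Fr g = g * n_Fr`, namely `n_Fr⁻¹ * n_σ * σ(n_Fr)`. Thus `n_Fr` is itself
a solution `y` of the equation, and two solutions differ by a left factor fixed under
`x ↦ n_σ * σ(x) * n_σ⁻¹`.
-/

/-- The Lang map `g ↦ g⁻¹ * σ g` of a self-map `σ` of a group; its values at `g` for `σ` and `Fr`
are the elements `n_σ` and `n_Fr`. -/
def langMap {G : Type*} [Group G] (σ : G → G) (g : G) : G :=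
  g⁻¹ * σ g

/-- The norm `N_q(x) = x * σ x * ⋯ * σ^[q - 1] x` of a self-map `σ` of a monoid. It is a product
over a list because the factors need not commute. -/
def twistedNorm {M : Type*} [Monoid M] (σ : M → M) (q : ℕ) (x : M) : M :=
  ((List.range q).map fun i => σ^[i] x).prod

section LangMap

variable {G H : Type*} [Group G] [Group H]

theorem langMap_mul (σ : G →* G) (a b : G) :
    langMap σ (a * b) = b⁻¹ * langMap σ a * σ b := by
  simp only [langMap, map_mul, mul_inv_rev, mul_assoc]

theorem map_langMap {τ : G → G} {σ : H → H} (φ : G →* H) (h : Function.Semiconj φ τ σ) (g : G) :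
    φ (langMap τ g) = langMap σ (φ g) := by
  simp only [langMap, map_mul, map_inv, h.eq]

theorem iterate_langMap (σ : G →* G) (i : ℕ) (g : G) :
    σ^[i] (langMap σ g) = (σ^[i] g)⁻¹ / (σ^[i + 1] g)⁻¹ := by
  simp only [langMap, iterate_map_mul, iterate_map_inv, Function.iterate_succ_apply, div_inv_eq_mul]

theorem twistedNorm_langMap (σ : G →* G) (q : ℕ) (g : G) :
    twistedNorm σ q (langMap σ g) = langMap σ^[q] g := by
  simp only [twistedNorm, iterate_langMap]
  rw [List.prod_range_div' q fun i => (σ^[i] g)⁻¹, Function.iterate_zero_apply, div_inv_eq_mul,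
    langMap]

theorem map_twistedNorm_langMap {σ φ : G →* G} {q : ℕ} (h : Function.Semiconj φ σ^[q] σ) (g : G) :
    φ (twistedNorm σ q (langMap σ g)) = (langMap φ g)⁻¹ * langMap σ g * σ (langMap φ g) :=
  calc
    φ (twistedNorm σ q (langMap σ g)) = langMap σ (φ g) := by
      rw [twistedNorm_langMap, map_langMap φ h]
    _ = langMap σ (g * langMap φ g) := by rw [langMap.eq_def φ, mul_inv_cancel_left]
    _ = (langMap φ g)⁻¹ * langMap σ g * σ (langMap φ g) := langMap_mul σ g _

theorem inv_mul_mul_map_eq_iff (σ : G →* G) (n a b : G) :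
    a⁻¹ * n * σ a = b⁻¹ * n * σ b ↔ n * σ (a * b⁻¹) * n⁻¹ = a * b⁻¹ := by
  rw [map_mul, map_inv, mul_inv_eq_iff_eq_mul, ← mul_assoc n, mul_inv_eq_iff_eq_mul, mul_assoc a⁻¹,
    inv_mul_eq_iff_eq_mul]
  simp only [mul_assoc]

theorem frobenius_norm_uniqueness_general (σ φ : G →* G) {q : ℕ}
    (h : Function.Semiconj φ σ^[q] σ) (g y : G) :
    φ (twistedNorm σ q (langMap σ g)) = y⁻¹ * langMap σ g * σ y ↔
      langMap σ g * σ (langMap φ g * y⁻¹) * (langMap σ g)⁻¹ = langMap φ g * y⁻¹ := by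
  rw [map_twistedNorm_langMap h, inv_mul_mul_map_eq_iff]

end LangMap

section MulAut

variable {M : Type*} [Mul M]

theorem coe_mulAut_pow (σ : MulAut M) (n : ℕ) : ⇑(σ ^ n) = σ^[n] :=
  hom_coe_pow _ rfl (fun _ _ => rfl) σ n

theorem semiconj_of_inv_mul_mul_eq_pow {σ φ : MulAut M} {q : ℕ} (h : φ⁻¹ * σ * φ = σ ^ q) :
    Function.Semiconj φ σ^[q] σ := fun x => by
  rw [← coe_mulAut_pow, ← h, ← MulAut.mul_apply, mul_assoc, mul_inv_cancel_left, MulAut.mul_apply]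

end MulAut

/-- Setup as in the Frobenius norm formula: `G` a group, `σ, Fr` automorphisms,
`q` a positive integer with `Fr⁻¹ ∘ σ ∘ Fr = σ^q`, and for `g ∈ G` put
`n_σ = g⁻¹·σ(g)`, `n_Fr = g⁻¹·Fr(g)`, `N_q(x) = x·σ(x)···σ^{q-1}(x)`.
If `y ∈ G` satisfies `Fr(N_q(n_σ)) = y⁻¹·n_σ·σ(y)`, then `u := n_Fr·y⁻¹`
satisfies `n_σ·σ(u)·n_σ⁻¹ = u`; i.e. the equation determines `n_Fr` up to left
multiplication by a fixed point of `x ↦ n_σ·σ(x)·n_σ⁻¹`. -/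
theorem frobenius_norm_uniqueness {G : Type*} [Group G] (σ Fr : MulAut G)
    (q : ℕ) (hq : 0 < q) (hcomm : Fr⁻¹ * σ * Fr = σ ^ q) (g y : G)
    (hy : Fr (((List.range q).map (fun i => (σ ^ i) (g⁻¹ * σ g))).prod) =
      y⁻¹ * (g⁻¹ * σ g) * σ y) :
    (g⁻¹ * σ g) * σ ((g⁻¹ * Fr g) * y⁻¹) * (g⁻¹ * σ g)⁻¹ =
      (g⁻¹ * Fr g) * y⁻¹ := by
  simp only [coe_mulAut_pow] at hy
  exact (frobenius_norm_uniqueness_general (σ : G →* G) (Fr : G →* G)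
    (semiconj_of_inv_mul_mul_eq_pow hcomm) g y).mp hy
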